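/- arXiv:1110.0091 — 2 statements merged into one kernel-verified Lean document; each statement's English description precedes it below -/
import Mathlib

section
/- Let φ : S² → S² be a homeomorphism with φⁿ = id, and let λ ≠ 1 be an n-th root of unity. Then for every continuous function f : S² → ℂ there exists x ∈ S² with ∑_{i=0}^{n-1} λⁱ f(φⁱ(x)) = 0. -/
/-- A continuous function whose exponential is constant is constant. -/
theorem const_of_exp_const {A : Type*} [TopologicalSpace A] [PreconnectedSpace A] {g : A → ℂ}
    (hg : Continuous g) (he : ∀ a b, Complex.exp (g a) = Complex.exp (g b)) (a b : A) :
    g a = g b :=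
  Complex.isCoveringMap_exp.const_of_comp hg (fun a b => Subtype.ext (he a b)) a b

/-- Continuous logarithms on the plane. -/
theorem plane_log (F : ℂ → ℂ) (hF : Continuous F) (h0 : ∀ z, F z ≠ 0) :
    ∃ G : ℂ → ℂ, Continuous G ∧ ∀ z, Complex.exp (G z) = F z := by
  obtain ⟨G, ⟨-, hG⟩, -⟩ := Complex.isCoveringMapOn_exp.existsUnique_continuousMap_lifts
    ⟨F, hF⟩ (a₀ := 0) (Complex.exp_log (h0 0)) (fun a => h0 a)
  exact ⟨G, G.continuous, fun z => congrFun hG z⟩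

/-- The parametrization of a hemisphere by the plane, collapsing the outside of the unit disc. -/
noncomputable def hemi (ε : ℝ) (w : ℂ) : EuclideanSpace ℝ (Fin 3) :=
  !₂[w.re / max 1 ‖w‖, w.im / max 1 ‖w‖, ε * Real.sqrt (1 - (‖w‖ / max 1 ‖w‖) ^ 2)]

theorem hemi_mem (ε : ℝ) (hε : ε ^ 2 = 1) (w : ℂ) :
    hemi ε w ∈ Metric.sphere (0 : EuclideanSpace ℝ (Fin 3)) 1 := by
  have h1 : 0 < max 1 ‖w‖ := lt_of_lt_of_le one_pos (le_max_left _ _)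
  have h2 : ‖w‖ / max 1 ‖w‖ ≤ 1 := (div_le_one h1).2 (le_max_right _ _)
  have h3 : 0 ≤ ‖w‖ / max 1 ‖w‖ := by positivity
  have h4 : (‖w‖ / max 1 ‖w‖) ^ 2 ≤ 1 := by nlinarith
  have h5 : ‖w‖ ^ 2 = w.re ^ 2 + w.im ^ 2 := by
    rw [← Complex.normSq_eq_norm_sq, Complex.normSq_apply]; ring
  rw [mem_sphere_zero_iff_norm, EuclideanSpace.norm_eq, Real.sqrt_eq_one]
  simp only [hemi, Fin.sum_univ_three, Real.norm_eq_abs, sq_abs]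
  simp only [PiLp.toLp_apply, Matrix.cons_val]
  rw [mul_pow, hε, Real.sq_sqrt (by linarith), div_pow, div_pow, div_pow, h5]
  ring

theorem hemi_cont (ε : ℝ) : Continuous (hemi ε) := by
  have h1 : ∀ w : ℂ, max 1 ‖w‖ ≠ 0 := fun w =>
    (lt_of_lt_of_le one_pos (le_max_left _ _)).ne'
  have h2 : Continuous fun w : ℂ => max 1 ‖w‖ := by fun_prop
  refine (PiLp.continuous_toLp 2 _).comp (continuous_pi fun i => ?_)
  fin_cases i
  · exact Complex.continuous_re.div h2 h1
  · exact Complex.continuous_im.div h2 h1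
  · exact continuous_const.mul (Real.continuous_sqrt.comp
      (continuous_const.sub ((continuous_norm.div h2 h1).pow 2)))

theorem sphere_sq (x : Metric.sphere (0 : EuclideanSpace ℝ (Fin 3)) 1) :
    x.1 0 ^ 2 + x.1 1 ^ 2 + x.1 2 ^ 2 = 1 := by
  have h := mem_sphere_zero_iff_norm.1 x.2
  rw [EuclideanSpace.norm_eq, Real.sqrt_eq_one] at h
  simpa [Fin.sum_univ_three] using h

theorem hemi_proj (ε : ℝ) (x : Metric.sphere (0 : EuclideanSpace ℝ (Fin 3)) 1)
    (h : ε * |x.1 2| = x.1 2) : hemi ε ⟨x.1 0, x.1 1⟩ = x.1 := by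
  have hx := sphere_sq x
  have h5 : ‖(⟨x.1 0, x.1 1⟩ : ℂ)‖ ^ 2 = x.1 0 ^ 2 + x.1 1 ^ 2 := by
    rw [← Complex.normSq_eq_norm_sq, Complex.normSq_apply]; ring
  have h6 : ‖(⟨x.1 0, x.1 1⟩ : ℂ)‖ ≤ 1 := by
    rw [← sq_le_one_iff₀ (norm_nonneg _), h5]; nlinarith [sq_nonneg (x.1 2)]
  have h7 : 1 - (x.1 0 ^ 2 + x.1 1 ^ 2) = x.1 2 ^ 2 := by linarith
  ext i
  simp only [hemi, max_eq_left h6, div_one, h5, h7, Real.sqrt_sq_eq_abs, h]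
  fin_cases i <;> rfl

/-- Continuous logarithms on the sphere. -/
theorem sphere_log (F : Metric.sphere (0 : EuclideanSpace ℝ (Fin 3)) 1 → ℂ) (hF : Continuous F)
    (h0 : ∀ z, F z ≠ 0) :
    ∃ G : Metric.sphere (0 : EuclideanSpace ℝ (Fin 3)) 1 → ℂ,
      Continuous G ∧ ∀ z, Complex.exp (G z) = F z := by
  obtain ⟨P, hPc, hP⟩ := plane_log (fun w => F ⟨hemi 1 w, hemi_mem 1 (by norm_num) w⟩)
    (hF.comp ((hemi_cont 1).subtype_mk _)) (fun _ => h0 _)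
  obtain ⟨Q, hQc, hQ⟩ := plane_log (fun w => F ⟨hemi (-1) w, hemi_mem (-1) (by norm_num) w⟩)
    (hF.comp ((hemi_cont (-1)).subtype_mk _)) (fun _ => h0 _)
  have hpre : IsPreconnected (Metric.sphere (0 : ℂ) 1) :=
    isPreconnected_sphere (by simp) 0 1
  haveI : PreconnectedSpace (Metric.sphere (0 : ℂ) 1) :=
    isPreconnected_iff_preconnectedSpace.1 hpre
  have heq : ∀ w : Metric.sphere (0 : ℂ) 1, Complex.exp (P w - Q w) = 1 := by
    intro w
    have hw : ‖(w : ℂ)‖ = 1 := mem_sphere_zero_iff_norm.1 w.2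
    have : hemi 1 w = hemi (-1) w := by simp [hemi, hw]
    rw [Complex.exp_sub, hP, hQ]
    simp only [this]
    exact div_self (h0 _)
  have hc := const_of_exp_const (A := Metric.sphere (0 : ℂ) 1) (g := fun w => P w - Q w)
    (by fun_prop) (fun a b => by rw [heq, heq])
  let o : Metric.sphere (0 : ℂ) 1 := ⟨1, by simp⟩
  let c := P o - Q o
  have hec : Complex.exp c = 1 := heq o
  let p : Metric.sphere (0 : EuclideanSpace ℝ (Fin 3)) 1 → ℂ := fun x => ⟨x.1 0, x.1 1⟩
  have hp : Continuous p := by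
    have : p = fun x => ((x.1 0 : ℝ) : ℂ) + ((x.1 1 : ℝ) : ℂ) * Complex.I := by
      funext x; exact Complex.mk_eq_add_mul_I _ _
    rw [this]; fun_prop
  refine ⟨fun x => if 0 ≤ x.1 2 then P (p x) else Q (p x) + c, ?_, ?_⟩
  · refine Continuous.if_le (hPc.comp hp) ((hQc.comp hp).add continuous_const)
      continuous_const (by fun_prop) ?_
    intro x hx
    have hm : p x ∈ Metric.sphere (0 : ℂ) 1 := by
      have h := sphere_sq x
      rw [← hx] at h
      have h5 : ‖p x‖ ^ 2 = 1 := by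
        rw [← Complex.normSq_eq_norm_sq, Complex.normSq_apply]
        simp only [p]; linarith
      rw [mem_sphere_zero_iff_norm]
      nlinarith [norm_nonneg (p x)]
    have h : P (p x) - Q (p x) = c := hc ⟨p x, hm⟩ o
    rw [← h]; ring
  · intro x
    dsimp only
    split_ifs with h
    · rw [hP]
      congr 1
      exact Subtype.ext (hemi_proj 1 x (by rw [abs_of_nonneg h, one_mul]))
    · rw [Complex.exp_add, hec, mul_one, hQ]
      congr 1
      exact Subtype.ext (hemi_proj (-1) x (by rw [abs_of_neg (not_le.1 h)]; ring))

theorem stmt_2 (n : ℕ) (hn : 0 < n)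
    (φ : Metric.sphere (0 : EuclideanSpace ℝ (Fin 3)) 1 ≃ₜ
         Metric.sphere (0 : EuclideanSpace ℝ (Fin 3)) 1)
    (hφ : ∀ x, (⇑φ)^[n] x = x)
    (lam : ℂ) (hlam : lam ^ n = 1) (hlam1 : lam ≠ 1)
    (f : C(Metric.sphere (0 : EuclideanSpace ℝ (Fin 3)) 1, ℂ)) :
    ∃ x : Metric.sphere (0 : EuclideanSpace ℝ (Fin 3)) 1,
      ∑ i ∈ Finset.range n, lam ^ i * f ((⇑φ)^[i] x) = 0 := by
  by_contra hcon
  push Not at hcon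
  set F : Metric.sphere (0 : EuclideanSpace ℝ (Fin 3)) 1 → ℂ :=
    fun x => ∑ i ∈ Finset.range n, lam ^ i * f ((⇑φ)^[i] x) with hFdef
  have hFc : Continuous F := by
    refine continuous_finsetSum _ fun i _ => continuous_const.mul (f.continuous.comp ?_)
    exact φ.continuous.iterate i
  have hshift : ∀ x, lam * F (φ x) = F x := by
    intro x
    have h1 := Finset.sum_range_succ (fun i => lam ^ i * f ((⇑φ)^[i] x)) n
    have h2 := Finset.sum_range_succ' (fun i => lam ^ i * f ((⇑φ)^[i] x)) n
    rw [h1, hlam, hφ] at h2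
    simp only [pow_zero, Function.iterate_zero, id_eq] at h2
    have h3 := add_right_cancel h2
    simp only [hFdef]
    rw [h3, Finset.mul_sum]
    refine Finset.sum_congr rfl fun i _ => ?_
    rw [Function.iterate_succ_apply]; ring
  obtain ⟨G, hGc, hG⟩ := sphere_log F hFc hcon
  have hpre : IsPreconnected (Metric.sphere (0 : EuclideanSpace ℝ (Fin 3)) 1) :=
    isPreconnected_sphere (by
      rw [← Module.finrank_eq_rank, finrank_euclideanSpace_fin]; norm_num) 0 1
  haveI : PreconnectedSpace (Metric.sphere (0 : EuclideanSpace ℝ (Fin 3)) 1) :=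
    isPreconnected_iff_preconnectedSpace.1 hpre
  have hexp : ∀ x, lam = Complex.exp (G x - G (φ x)) := by
    intro x
    rw [Complex.exp_sub, hG, hG, ← hshift x, mul_div_cancel_right₀ _ (hcon (φ x))]
  have hc := const_of_exp_const (g := fun x => G x - G (φ x))
    (hGc.sub (hGc.comp φ.continuous)) (fun a b => by rw [← hexp, ← hexp])
  let o : Metric.sphere (0 : EuclideanSpace ℝ (Fin 3)) 1 :=
    ⟨hemi 1 0, hemi_mem 1 (by norm_num) 0⟩
  have hit : ∀ k : ℕ, G o - G ((⇑φ)^[k] o) = k * (G o - G (φ o)) := by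
    intro k
    induction k with
    | zero => simp
    | succ k ih =>
      have h := hc ((⇑φ)^[k] o) o
      rw [Function.iterate_succ_apply']
      push_cast
      linear_combination ih + h
  have h := hit n
  rw [hφ, sub_self] at h
  have hn' : (n : ℂ) ≠ 0 := by exact_mod_cast hn.ne'
  have hz : G o - G (φ o) = 0 := (mul_eq_zero.1 h.symm).resolve_left hn'
  apply hlam1
  rw [hexp o, hz, Complex.exp_zero]
end

section
/- Let A be a unital complex Banach algebra without nontrivial idempotents (no a with a² = a, a ≠ 0, a ≠ 1). Then the spectrum of every element of A is connected. -/
open MeasureTheory Set Filter Topology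

/-- Twice the Wirtinger derivative. -/
noncomputable def dbarX (φ : ℂ → ℂ) (w : ℂ) : ℂ :=
  fderiv ℝ φ w 1 + Complex.I * fderiv ℝ φ w Complex.I

lemma integrable_of_supp {X E : Type*} [TopologicalSpace X] [T2Space X] [MeasurableSpace X]
    [OpensMeasurableSpace X]
    [NormedAddCommGroup E] {μ : Measure X} [IsFiniteMeasureOnCompacts μ] {f : X → E} {K : Set X}
    (hK : IsCompact K) (hf : ContinuousOn f K) (hs : ∀ x, x ∉ K → f x = 0) : Integrable f μ := by
  rw [← integrableOn_iff_integrable_of_support_subset (s := K)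
    (fun x hx => by by_contra h; exact hx (hs x h))]
  exact hf.integrableOn_compact' hK hK.measurableSet

lemma dbarX_continuous {φ : ℂ → ℂ} (h : ContDiff ℝ 1 φ) : Continuous (dbarX φ) := by
  have := h.continuous_fderiv (by norm_num)
  unfold dbarX
  fun_prop

lemma dbarX_congr {φ ψ : ℂ → ℂ} {w : ℂ} (h : φ =ᶠ[𝓝 w] ψ) : dbarX φ w = dbarX ψ w := by
  simp [dbarX, h.fderiv_eq]

lemma dbarX_const_nhds {φ : ℂ → ℂ} {w c : ℂ} (h : φ =ᶠ[𝓝 w] fun _ => c) :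
    w ∉ tsupport (dbarX φ) := by
  rw [notMem_tsupport_iff_eventuallyEq]
  filter_upwards [h.eventually_nhds] with z hz
  rw [dbarX_congr hz]; simp [dbarX]

lemma dbarX_tsupport (φ : ℂ → ℂ) : tsupport (dbarX φ) ⊆ tsupport φ := by
  intro w hw
  by_contra h
  rw [notMem_tsupport_iff_eventuallyEq] at h
  exact dbarX_const_nhds (c := 0) h hw

lemma dbarX_compact {φ : ℂ → ℂ} (h : HasCompactSupport φ) : HasCompactSupport (dbarX φ) :=
  h.of_isClosed_subset (isClosed_tsupport _) (dbarX_tsupport φ)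

lemma dbarX_sub {φ ψ : ℂ → ℂ} (h : ContDiff ℝ 1 φ) (h' : ContDiff ℝ 1 ψ) (w : ℂ) :
    dbarX (fun z => φ z - ψ z) w = dbarX φ w - dbarX ψ w := by
  simp only [dbarX]
  rw [fderiv_fun_sub (h.differentiable (by norm_num) w) (h'.differentiable (by norm_num) w)]
  simp; ring

lemma stokes {E : Type*} [NormedAddCommGroup E] [NormedSpace ℂ E] [CompleteSpace E]
    {φ : ℂ → ℂ} (hφ : ContDiff ℝ 1 φ) (hc : HasCompactSupport φ) {U : Set ℂ} (hU : IsOpen U)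
    (hs : tsupport φ ⊆ U) {G : ℂ → E} (hG : DifferentiableOn ℂ G U) :
    ∫ w, dbarX φ w • G w = 0 := by
  have hf := hφ.continuous_fderiv (by norm_num)
  have hφc := hφ.continuous
  have hGc : ContinuousOn G (tsupport φ) := hG.continuousOn.mono hs
  have hG' : ContinuousOn (deriv G) (tsupport φ) := (hG.deriv hU).continuousOn.mono hs
  have z0 : ∀ x, x ∉ tsupport φ → φ x = 0 := fun x hx => image_eq_zero_of_notMem_tsupport hx
  have z1 : ∀ x, x ∉ tsupport φ → fderiv ℝ φ x = 0 := fun x hx => by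
    rw [notMem_tsupport_iff_eventuallyEq] at hx
    rw [hx.fderiv_eq]; simp
  have i1 : ∀ v : ℂ, Integrable (fun x => fderiv ℝ φ x v • G x) := fun v =>
    integrable_of_supp hc (by fun_prop) (fun x hx => by simp [z1 x hx])
  have key : ∀ v : ℂ, ∫ w, φ w • (v • deriv G w) = - ∫ w, fderiv ℝ φ w v • G w := by
    intro v
    refine integral_bilinear_hasFDerivAt_right_eq_neg_left_of_integrable (μ := volume)
      (f := φ) (f' := fderiv ℝ φ) (g := G)
      (g' := fun w => (ContinuousLinearMap.toSpanSingleton ℂ (deriv G w)).restrictScalars ℝ)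
      (B := ContinuousLinearMap.lsmul ℝ ℂ) (v := v) (i1 v) ?_ ?_ ?_ ?_
    · exact integrable_of_supp hc (K := tsupport φ) (f := fun w => φ w • (v • deriv G w))
        (by fun_prop) (fun x hx => by simp [z0 x hx])
    · exact integrable_of_supp hc (K := tsupport φ) (f := fun w => φ w • G w)
        (by fun_prop) (fun x hx => by simp [z0 x hx])
    · intro x _
      exact (hφ.differentiable (by norm_num) x).hasFDerivAt
    · intro x hx
      exact ((hG.differentiableAt (hU.mem_nhds (hs hx))).hasDerivAt.hasFDerivAt).restrictScalars ℝ
  have k1 := key 1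
  have kI := key Complex.I
  have e : ∫ w, φ w • (Complex.I • deriv G w) = Complex.I • ∫ w, φ w • ((1 : ℂ) • deriv G w) := by
    rw [← integral_smul]
    congr 1; ext w; rw [one_smul, smul_comm]
  have : ∀ w, dbarX φ w • G w
      = fderiv ℝ φ w 1 • G w + Complex.I • (fderiv ℝ φ w Complex.I • G w) := by
    intro w; rw [dbarX, add_smul, mul_smul]
  simp_rw [this]
  have i2 : Integrable (fun w => Complex.I • (fderiv ℝ φ w Complex.I • G w)) :=
    (i1 Complex.I).smul Complex.I
  rw [integral_add (i1 1) i2, integral_smul]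
  rw [e, k1] at kI
  have : Complex.I • (Complex.I • -∫ w, fderiv ℝ φ w 1 • G w)
     = Complex.I • -∫ w, fderiv ℝ φ w Complex.I • G w := by rw [kI]
  rw [smul_smul, Complex.I_mul_I, neg_one_smul, neg_neg, smul_neg] at this
  rw [this]; simp

lemma exists_cutoff {K U : Set ℂ} (hK : IsCompact K) (hU : IsOpen U) (hKU : K ⊆ U) :
    ∃ φ : ℂ → ℂ, ContDiff ℝ 1 φ ∧ HasCompactSupport φ ∧ tsupport φ ⊆ U ∧
      ∀ x ∈ K, φ =ᶠ[𝓝 x] fun _ => 1 := by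
  obtain ⟨L, hL, hKL, hLU⟩ := exists_compact_between hK hU hKU
  obtain ⟨f, h1, h0, -⟩ := exists_contMDiffMap_one_nhds_of_subset_interior
    (n := 1) (modelWithCornersSelf ℝ ℂ) hK.isClosed hKL
  have hts : tsupport (fun z => (f z : ℂ)) ⊆ L := by
    refine closure_minimal (fun x hx => ?_) hL.isClosed
    by_contra h
    exact hx (by simp [h0 x h])
  refine ⟨fun z => (f z : ℂ), ?_, ?_, hts.trans hLU, ?_⟩
  · exact Complex.ofRealCLM.contDiff.comp f.contMDiff.contDiff
  · exact hL.of_isClosed_subset (isClosed_tsupport _) hts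
  · intro x hx
    have := (eventually_nhdsSet_iff_forall.1 h1) x hx
    filter_upwards [this] with z hz
    simp [hz]

/-- A radial bump. -/
noncomputable def bumpX (w : ℂ) : ℂ := (Real.smoothTransition (2 - (w.re ^ 2 + w.im ^ 2)) : ℝ)

noncomputable def constX : ℂ := ∫ w, dbarX bumpX w • w⁻¹

lemma bumpX_contDiff : ContDiff ℝ 1 bumpX := by
  have h1 : ContDiff ℝ 1 Real.smoothTransition := Real.smoothTransition.contDiff (n := 1)
  have h2 : ContDiff ℝ 1 (fun w : ℂ => 2 - (w.re ^ 2 + w.im ^ 2)) := by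
    have a := Complex.reCLM.contDiff (n := 1)
    have b := Complex.imCLM.contDiff (n := 1)
    exact contDiff_const.sub ((a.pow 2).add (b.pow 2))
  exact Complex.ofRealCLM.contDiff.comp (h1.comp h2)

lemma norm_sq_X (w : ℂ) : ‖w‖ ^ 2 = w.re ^ 2 + w.im ^ 2 := by
  rw [Complex.sq_norm, Complex.normSq_apply]; ring

lemma bumpX_compact : HasCompactSupport bumpX := by
  refine HasCompactSupport.intro (isCompact_closedBall (0 : ℂ) 2) (fun x hx => ?_)
  have : 2 < ‖x‖ := by simpa using hx
  rw [bumpX, Real.smoothTransition.zero_of_nonpos]; · simp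
  rw [← norm_sq_X]; nlinarith

lemma bumpX_one : bumpX =ᶠ[𝓝 0] fun _ => 1 := by
  filter_upwards [Metric.ball_mem_nhds (0 : ℂ) one_pos] with x hx
  have : ‖x‖ < 1 := by simpa using hx
  rw [bumpX, Real.smoothTransition.one_of_one_le]; · simp
  rw [← norm_sq_X]; nlinarith [norm_nonneg x]

lemma dbarX_bump (w : ℂ) :
    dbarX bumpX w = -2 * (deriv Real.smoothTransition (2 - (w.re ^ 2 + w.im ^ 2)) : ℝ) * w := by
  have hS : HasDerivAt Real.smoothTransition (deriv Real.smoothTransition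
      (2 - (w.re ^ 2 + w.im ^ 2))) (2 - (w.re ^ 2 + w.im ^ 2)) :=
    (((Real.smoothTransition.contDiff (n := 1)).differentiable (by norm_num)) _).hasDerivAt
  have a := Complex.reCLM.hasFDerivAt (x := w)
  have b := Complex.imCLM.hasFDerivAt (x := w)
  have h2 := ((a.pow 2).add (b.pow 2)).const_sub 2
  have h3 := hS.comp_hasFDerivAt w h2
  have h4 := Complex.ofRealCLM.hasFDerivAt.comp w h3
  have h5 : HasFDerivAt bumpX _ w := h4
  rw [dbarX, h5.fderiv]
  apply Complex.ext <;> simp <;> ring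

lemma constX_ne : constX ≠ 0 := by
  set g : ℝ → ℝ := deriv Real.smoothTransition with hg
  have hgc : Continuous g :=
    (Real.smoothTransition.contDiff (n := 1)).continuous_deriv (by norm_num)
  have hg0 : ∀ t, 0 ≤ g t := fun t => Real.smoothTransition.monotone.deriv_nonneg
  have hgn : ∀ t, t < 0 → g t = 0 := by
    intro t ht
    have : Real.smoothTransition =ᶠ[𝓝 t] fun _ => 0 := by
      filter_upwards [Iio_mem_nhds ht] with x hx
      exact Real.smoothTransition.zero_of_nonpos (le_of_lt hx)
    rw [hg, this.deriv_eq]; simp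
  let F : ℂ → ℝ := fun w => g (2 - (w.re ^ 2 + w.im ^ 2))
  have hFc : Continuous F := by fun_prop
  have hFs : HasCompactSupport F := by
    refine HasCompactSupport.intro (isCompact_closedBall (0 : ℂ) 2) (fun x hx => ?_)
    have : 2 < ‖x‖ := by simpa using hx
    refine hgn _ ?_
    rw [← norm_sq_X]; nlinarith
  obtain ⟨t, ht, htn⟩ : ∃ t ∈ Ioo (0 : ℝ) 1, g t ≠ 0 := by
    obtain ⟨t, ht, h⟩ := exists_deriv_eq_slope Real.smoothTransition (zero_lt_one)
      Real.smoothTransition.continuous.continuousOn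
      (((Real.smoothTransition.contDiff (n := 1)).differentiable (by norm_num)).differentiableOn)
    exact ⟨t, ht, by rw [hg, h]; simp⟩
  have hpos : 0 < ∫ w, F w := by
    refine hFc.integral_pos_of_hasCompactSupport_nonneg_nonzero hFs (fun w => hg0 _)
      (x := (Real.sqrt (2 - t) : ℂ)) ?_
    have : 0 ≤ 2 - t := by linarith [ht.2]
    simpa [F, Real.sq_sqrt this] using htn
  have : constX = ((-2 * ∫ w, F w : ℝ) : ℂ) := by
    rw [constX, ← integral_const_mul, ← integral_complex_ofReal]
    refine integral_congr_ae ?_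
    have : ∀ᵐ w : ℂ, w ≠ 0 := by simp [ae_iff]
    filter_upwards [this] with w hw
    rw [dbarX_bump]
    simp [F, hg, hw]
  rw [this]
  rw [Complex.ofReal_ne_zero]
  exact mul_ne_zero (by norm_num) hpos.ne'

lemma cauchy_one {φ : ℂ → ℂ} (hφ : ContDiff ℝ 1 φ) (hc : HasCompactSupport φ) {l : ℂ}
    (h : φ =ᶠ[𝓝 l] fun _ => 1) : ∫ w, dbarX φ w • (w - l)⁻¹ = constX := by
  let χ : ℂ → ℂ := fun w => bumpX (w - l)
  have hχ : ContDiff ℝ 1 χ := bumpX_contDiff.comp (contDiff_id.sub contDiff_const)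
  have hχc : HasCompactSupport χ := bumpX_compact.comp_homeomorph (Homeomorph.subRight l)
  have hχ1 : χ =ᶠ[𝓝 l] fun _ => 1 := by
    have : Tendsto (fun w => w - l) (𝓝 l) (𝓝 0) := by
      have : ContinuousAt (fun w => w - l) l := by fun_prop
      simpa [ContinuousAt] using this
    exact this.eventually bumpX_one
  have hd : ∀ w, dbarX χ w = dbarX bumpX (w - l) := by
    intro w; simp only [dbarX, χ]; rw [fderiv_comp_sub]
  have e1 : ∫ w, dbarX χ w • (w - l)⁻¹ = constX := by
    simp_rw [hd]
    exact integral_sub_right_eq_self (fun w => dbarX bumpX w • w⁻¹) l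
  have hst : ∫ w, dbarX (fun z => φ z - χ z) w • (w - l)⁻¹ = 0 := by
    refine stokes (hφ.sub hχ) (hc.sub hχc) (U := {l}ᶜ) isOpen_compl_singleton ?_ ?_
    · intro x hx hxl
      rw [mem_singleton_iff] at hxl
      subst hxl
      refine (notMem_tsupport_iff_eventuallyEq.2 ?_) hx
      filter_upwards [h, hχ1] with z h1 h2
      simp [h1, h2]
    · intro x hx
      have : x - l ≠ 0 := sub_ne_zero.2 hx
      have hd : DifferentiableAt ℂ (fun w : ℂ => w - l) x := by fun_prop
      exact (hd.inv this).differentiableWithinAt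
  have hi : ∀ ψ : ℂ → ℂ, ContDiff ℝ 1 ψ → HasCompactSupport ψ → ψ =ᶠ[𝓝 l] (fun _ => 1) →
      Integrable (fun w => dbarX ψ w • (w - l)⁻¹) := by
    intro ψ h1 h2 h3
    refine integrable_of_supp (dbarX_compact h2) ?_
      (fun x hx => by simp [image_eq_zero_of_notMem_tsupport hx])
    refine (dbarX_continuous h1).continuousOn.smul (ContinuousOn.inv₀ (by fun_prop) ?_)
    intro x hx hxl
    rw [sub_eq_zero.1 hxl] at hx
    exact dbarX_const_nhds h3 hx
  simp_rw [dbarX_sub hφ hχ, sub_smul] at hst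
  rw [integral_sub (hi φ hφ hc h) (hi χ hχ hχc hχ1), sub_eq_zero] at hst
  rw [hst, e1]

lemma cauchy_zero {φ : ℂ → ℂ} (hφ : ContDiff ℝ 1 φ) (hc : HasCompactSupport φ) {l : ℂ}
    (h : l ∉ tsupport φ) : ∫ w, dbarX φ w • (w - l)⁻¹ = 0 := by
  refine stokes hφ hc (U := {l}ᶜ) isOpen_compl_singleton ?_ ?_
  · rintro x hx rfl
    exact h hx
  · intro x hx
    have : x - l ≠ 0 := sub_ne_zero.2 hx
    have hd : DifferentiableAt ℂ (fun w : ℂ => w - l) x := by fun_prop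
    exact (hd.inv this).differentiableWithinAt

section alg
variable {A : Type*} [NormedRing A] [NormedAlgebra ℂ A] [CompleteSpace A]

lemma resX_diff (a : A) : DifferentiableOn ℂ (resolvent a) (resolventSet ℂ a) := fun _ hk =>
  (spectrum.hasDerivAt_resolvent_const_left hk).differentiableAt.differentiableWithinAt

lemma integrable_resX {a : A} {φ h : ℂ → ℂ} (hφ : ContDiff ℝ 1 φ) (hc : HasCompactSupport φ)
    (hr : tsupport (dbarX φ) ⊆ resolventSet ℂ a) (hh : ContinuousOn h (tsupport (dbarX φ))) :
    Integrable (fun w => dbarX φ w • (h w • resolvent a w)) :=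
  integrable_of_supp (dbarX_compact hc)
    ((dbarX_continuous hφ).continuousOn.smul
      (hh.smul ((resX_diff a).continuousOn.mono hr)))
    (fun x hx => by simp [image_eq_zero_of_notMem_tsupport hx])

lemma inv_contX {S : Set ℂ} {l : ℂ} (hl : l ∉ S) : ContinuousOn (fun w => (w - l)⁻¹) S := by
  refine ContinuousOn.inv₀ (by fun_prop) ?_
  intro x hx hxl
  rw [sub_eq_zero.1 hxl] at hx
  exact hl hx

lemma resX_pt {a : A} {w l : ℂ} (hw : w ∈ resolventSet ℂ a) (hl : w ≠ l) :
    (algebraMap ℂ A l - a) * ((w - l)⁻¹ • resolvent a w) = (w - l)⁻¹ • 1 - resolvent a w ∧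
    ((w - l)⁻¹ • resolvent a w) * (algebraMap ℂ A l - a) = (w - l)⁻¹ • 1 - resolvent a w := by
  have h1 : (algebraMap ℂ A w - a) * resolvent a w = 1 := Ring.mul_inverse_cancel _ hw
  have h2 : resolvent a w * (algebraMap ℂ A w - a) = 1 := Ring.inverse_mul_cancel _ hw
  have hn : w - l ≠ 0 := sub_ne_zero.2 hl
  have e : algebraMap ℂ A l - a = (algebraMap ℂ A w - a) - (w - l) • (1 : A) := by
    rw [← Algebra.algebraMap_eq_smul_one, map_sub]; abel
  constructor
  · rw [e, mul_smul_comm, sub_mul, h1, smul_mul_assoc, one_mul, smul_sub, inv_smul_smul₀ hn]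
  · rw [e, smul_mul_assoc, mul_sub, h2, mul_smul_comm, mul_one, smul_sub, inv_smul_smul₀ hn]

lemma resX_int {a : A} {φ : ℂ → ℂ} (hφ : ContDiff ℝ 1 φ) (hc : HasCompactSupport φ)
    (hr : tsupport (dbarX φ) ⊆ resolventSet ℂ a) {l : ℂ} (hl : l ∉ tsupport (dbarX φ)) :
    (algebraMap ℂ A l - a) * (∫ w, dbarX φ w • ((w - l)⁻¹ • resolvent a w))
      = (∫ w, dbarX φ w • (w - l)⁻¹) • 1 - ∫ w, dbarX φ w • resolvent a w ∧
    (∫ w, dbarX φ w • ((w - l)⁻¹ • resolvent a w)) * (algebraMap ℂ A l - a)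
      = (∫ w, dbarX φ w • (w - l)⁻¹) • 1 - ∫ w, dbarX φ w • resolvent a w := by
  have i1 := integrable_resX hφ hc hr (inv_contX hl)
  have i2 : Integrable (fun w => dbarX φ w • resolvent a w) := by
    simpa using integrable_resX (h := fun _ => 1) hφ hc hr continuousOn_const
  have i3 : Integrable (fun w => dbarX φ w • (w - l)⁻¹) :=
    integrable_of_supp (dbarX_compact hc)
      ((dbarX_continuous hφ).continuousOn.smul (inv_contX hl))
      (fun x hx => by simp [image_eq_zero_of_notMem_tsupport hx])
  have key : ∀ w, (dbarX φ w • (w - l)⁻¹) • (1 : A) - dbarX φ w • resolvent a w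
      = dbarX φ w • ((w - l)⁻¹ • 1 - resolvent a w) := by
    intro w; rw [smul_sub, smul_assoc]
  rw [← integral_smul_const, ← integral_sub (i3.smul_const _) i2]
  constructor
  · rw [← integral_const_mul_of_integrable i1]
    congr 1; ext w
    rw [key]
    by_cases hw : w ∈ tsupport (dbarX φ)
    · rw [mul_smul_comm, (resX_pt (hr hw) (fun h : w = l => hl (h ▸ hw))).1]
    · simp [image_eq_zero_of_notMem_tsupport hw]
  · rw [← integral_mul_const_of_integrable i1]
    congr 1; ext w
    rw [key]
    by_cases hw : w ∈ tsupport (dbarX φ)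
    · rw [smul_mul_assoc, (resX_pt (hr hw) (fun h : w = l => hl (h ▸ hw))).2]
    · simp [image_eq_zero_of_notMem_tsupport hw]

lemma res_mulX {a : A} {φ ψ : ℂ → ℂ} (hφ : ContDiff ℝ 1 φ) (hc : HasCompactSupport φ)
    (hr : tsupport (dbarX φ) ⊆ resolventSet ℂ a)
    (hψ : ContDiff ℝ 1 ψ) (hc' : HasCompactSupport ψ)
    (hr' : tsupport (dbarX ψ) ⊆ resolventSet ℂ a)
    (h1 : ∀ x ∈ tsupport φ, ψ =ᶠ[𝓝 x] fun _ => 1) :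
    (∫ w, dbarX φ w • resolvent a w) * (∫ w, dbarX ψ w • resolvent a w)
      = constX • ∫ w, dbarX φ w • resolvent a w := by
  set P := ∫ w, dbarX ψ w • resolvent a w with hP
  have i2 : Integrable (fun w => dbarX φ w • resolvent a w) := by
    simpa using integrable_resX (h := fun _ => 1) hφ hc hr continuousOn_const
  have hdis : ∀ x ∈ tsupport (dbarX φ), x ∉ tsupport (dbarX ψ) := fun x hx =>
    dbarX_const_nhds (h1 x (dbarX_tsupport φ hx))
  have hdis' : ∀ x ∈ tsupport (dbarX ψ), x ∉ tsupport φ := fun x hx hx' =>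
    dbarX_const_nhds (h1 x hx') hx
  have pt : ∀ w, (dbarX φ w • resolvent a w) * P = constX • (dbarX φ w • resolvent a w)
      - ∫ u, dbarX φ w • (dbarX ψ u • ((u - w)⁻¹ • resolvent a u)) := by
    intro w
    by_cases hw : w ∈ tsupport (dbarX φ)
    · have h2 : resolvent a w * (algebraMap ℂ A w - a) = 1 := Ring.inverse_mul_cancel _ (hr hw)
      have := (resX_int hψ hc' hr' (hdis w hw)).1
      rw [cauchy_one hψ hc' (h1 w (dbarX_tsupport φ hw)), ← hP] at this
      have h3 := congrArg (fun x => resolvent a w * x) this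
      simp only [← mul_assoc, h2, one_mul, mul_sub, mul_smul_comm, mul_one] at h3
      rw [integral_smul, h3, smul_mul_assoc, smul_sub, smul_comm]
      abel
    · simp [image_eq_zero_of_notMem_tsupport hw]
  have hI : Integrable (Function.uncurry fun w u =>
      dbarX φ w • (dbarX ψ u • ((u - w)⁻¹ • resolvent a u))) (volume.prod volume) := by
    refine integrable_of_supp ((dbarX_compact hc).prod (dbarX_compact hc')) ?_ ?_
    · have c1 := dbarX_continuous hφ
      have c2 := dbarX_continuous hψ
      have c3 : ContinuousOn (fun p : ℂ × ℂ => resolvent a p.2)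
          (tsupport (dbarX φ) ×ˢ tsupport (dbarX ψ)) :=
        ((resX_diff a).continuousOn.mono hr').comp continuousOn_snd (fun p hp => hp.2)
      have c4 : ContinuousOn (fun p : ℂ × ℂ => (p.2 - p.1)⁻¹)
          (tsupport (dbarX φ) ×ˢ tsupport (dbarX ψ)) := by
        refine ContinuousOn.inv₀ (by fun_prop) ?_
        rintro ⟨x, y⟩ ⟨hx, hy⟩ hxy
        have : y = x := sub_eq_zero.1 hxy
        subst this
        exact hdis _ hx hy
      exact (c1.comp continuous_fst).continuousOn.smul
        ((c2.comp continuous_snd).continuousOn.smul (c4.smul c3))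
    · rintro ⟨x, y⟩ hxy
      rw [mem_prod, not_and_or] at hxy
      rcases hxy with h | h
      · simp [Function.uncurry, image_eq_zero_of_notMem_tsupport h]
      · simp [Function.uncurry, image_eq_zero_of_notMem_tsupport h]
  have h0 : ∫ w, ∫ u, dbarX φ w • (dbarX ψ u • ((u - w)⁻¹ • resolvent a u)) = 0 := by
    rw [integral_integral_swap hI]
    refine integral_eq_zero_of_ae (Eventually.of_forall fun u => ?_)
    have e : ∀ w, dbarX φ w • (dbarX ψ u • ((u - w)⁻¹ • resolvent a u))
        = (dbarX φ w • (w - u)⁻¹) • (-(dbarX ψ u • resolvent a u)) := by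
      intro w
      rw [← neg_sub w u, inv_neg]
      simp only [smul_smul, smul_eq_mul, neg_smul, smul_neg]
      congr 2; ring
    simp only [e]
    rw [integral_smul_const]
    by_cases hu : u ∈ tsupport (dbarX ψ)
    · rw [cauchy_zero hφ hc (hdis' u hu)]; simp
    · simp [image_eq_zero_of_notMem_tsupport hu]
  rw [← integral_mul_const_of_integrable i2]
  simp_rw [pt]
  have i4 : Integrable (fun w => constX • (dbarX φ w • resolvent a w)) := i2.smul constX
  have i5 : Integrable (fun w =>
      ∫ u, dbarX φ w • (dbarX ψ u • ((u - w)⁻¹ • resolvent a u))) := hI.integral_prod_left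
  rw [integral_sub i4 i5, h0, integral_smul, sub_zero]

end alg

theorem stmt_9 {A : Type*} [NormedRing A] [NormedAlgebra ℂ A] [CompleteSpace A]
    [Nontrivial A] (hidem : ∀ a : A, a * a = a → a = 0 ∨ a = 1) (a : A) :
    IsConnected (spectrum ℂ a) := by
  refine ⟨spectrum.nonempty a, ?_⟩
  have hcl := spectrum.isClosed (𝕜 := ℂ) a
  have hcp := spectrum.isCompact (𝕜 := ℂ) a
  rw [isPreconnected_iff_subset_of_fully_disjoint_closed hcl]
  intro u v hu hv huv hd
  by_contra! hcon
  obtain ⟨hnu, hnv⟩ := hcon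
  obtain ⟨l2, hl2, hl2u⟩ := not_subset.1 hnu
  obtain ⟨l1, hl1, hl1v⟩ := not_subset.1 hnv
  have hl1u : l1 ∈ u := (huv hl1).resolve_right hl1v
  have hl2v : l2 ∈ v := (huv hl2).resolve_left hl2u
  obtain ⟨φ, f1, f2, f3, f4⟩ := exists_cutoff (hcp.inter_right hu) hv.isOpen_compl
    (fun x hx hx' => disjoint_left.1 hd hx.2 hx')
  obtain ⟨ψ, g1, g2, g3, g4⟩ := exists_cutoff f2 hv.isOpen_compl f3
  have g4' : ∀ x ∈ spectrum ℂ a ∩ u, ψ =ᶠ[𝓝 x] fun _ => 1 := by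
    intro x hx
    refine g4 x (by_contra fun h => ?_)
    have := image_eq_zero_of_notMem_tsupport h
    rw [(f4 x hx).self_of_nhds] at this
    exact one_ne_zero this
  have res : ∀ θ : ℂ → ℂ, tsupport θ ⊆ vᶜ → (∀ x ∈ spectrum ℂ a ∩ u, θ =ᶠ[𝓝 x] fun _ => 1) →
      tsupport (dbarX θ) ⊆ resolventSet ℂ a := by
    intro θ h1 h2 x hx
    by_contra h
    have hs : x ∈ spectrum ℂ a := h
    rcases huv hs with h' | h'
    · exact dbarX_const_nhds (h2 x ⟨hs, h'⟩) hx
    · exact h1 (dbarX_tsupport θ hx) h'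
  have rφ := res φ f3 f4
  have rψ := res ψ g3 g4'
  have hmul := res_mulX f1 f2 rφ g1 g2 rψ g4
  have heq : ∫ w, dbarX ψ w • resolvent a w = ∫ w, dbarX φ w • resolvent a w := by
    have i : ∀ θ : ℂ → ℂ, ContDiff ℝ 1 θ → HasCompactSupport θ →
        tsupport (dbarX θ) ⊆ resolventSet ℂ a →
        Integrable (fun w => dbarX θ w • resolvent a w) := fun θ h1 h2 h3 => by
      simpa using integrable_resX (h := fun _ => 1) h1 h2 h3 continuousOn_const
    rw [← sub_eq_zero, ← integral_sub (i ψ g1 g2 rψ) (i φ f1 f2 rφ)]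
    simp_rw [← sub_smul, ← dbarX_sub g1 f1]
    refine stokes (g1.sub f1) (g2.sub f2) (spectrum.isOpen_resolventSet a) ?_ (resX_diff a)
    intro x hx
    by_contra h
    have hs : x ∈ spectrum ℂ a := h
    refine (notMem_tsupport_iff_eventuallyEq.2 ?_) hx
    rcases huv hs with h' | h'
    · filter_upwards [f4 x ⟨hs, h'⟩, g4' x ⟨hs, h'⟩] with z h1 h2
      simp [h1, h2]
    · filter_upwards [notMem_tsupport_iff_eventuallyEq.1 (fun h => f3 h h'),
        notMem_tsupport_iff_eventuallyEq.1 (fun h => g3 h h')] with z h1 h2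
      simp [h1, h2]
  rw [heq] at hmul
  have hn1 : l1 ∉ tsupport (dbarX φ) := fun h => hl1 (rφ h)
  have hn2 : l2 ∉ tsupport (dbarX φ) := fun h => hl2 (rφ h)
  have r1 := resX_int f1 f2 rφ hn1
  have r2 := resX_int f1 f2 rφ hn2
  rw [cauchy_one f1 f2 (f4 l1 ⟨hl1, hl1u⟩)] at r1
  rw [cauchy_zero f1 f2 (fun h => f3 h hl2v)] at r2
  set P := ∫ w, dbarX φ w • resolvent a w with hP
  have hc := constX_ne
  have inv : ∀ (x y : A) (c : ℂ), c ≠ 0 → x * y = c • 1 → y * x = c • 1 → IsUnit x := by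
    intro x y c hc h1 h2
    refine ⟨⟨x, c⁻¹ • y, ?_, ?_⟩, rfl⟩
    · rw [mul_smul_comm, h1, inv_smul_smul₀ hc]
    · rw [smul_mul_assoc, h2, inv_smul_smul₀ hc]
  have hid := hidem (constX⁻¹ • P) (by
    rw [smul_mul_smul_comm, hmul, smul_smul]; congr 1; field_simp)
  rcases hid with h | h
  · have hP0 : P = 0 := by
      rcases smul_eq_zero.1 h with h | h
      · exact absurd h (inv_ne_zero hc)
      · exact h
    rw [hP0, sub_zero] at r1
    exact hl1 (inv _ _ _ hc r1.1 r1.2)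
  · have hP1 : P = constX • 1 := by rw [← h, smul_inv_smul₀ hc]
    rw [hP1, zero_smul, zero_sub, ← neg_smul] at r2
    exact hl2 (inv _ _ _ (neg_ne_zero.2 hc) r2.1 r2.2)
end
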